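/- arXiv:1210.4781 — 5 statements merged into one kernel-verified Lean document; each statement's English description precedes it below -/
import Mathlib

section
/- Let k be an algebraically closed field and let U and U' be integral separated k-schemes of finite type (integral k-varieties), and let φ : U' → U be a finite surjective morphism. Then there exist a nonempty affine open subscheme W of U, a nonempty affine open subscheme W' of U' whose image under φ is contained in W, an integral affine k-variety W'', and k-morphisms φ₁ : W' → W'' and φ₂ : W'' → W such that: (1) the restriction of φ to W' equals φ₂ ∘ φ₁; (2) the extension of function fields k(W'') ↪ k(W') induced by φ₁ is purely inseparable; (3) the extension of function fields k(W) ↪ k(W'') induced by φ₂ is separable. -/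
open AlgebraicGeometry CategoryTheory

universe u

lemma aux_algebra {A B K L : Type u} [CommRing A] [CommRing B] [IsDomain A] [IsDomain B]
    [Field K] [Field L] [Algebra A B] [Algebra A K] [Algebra B L] [IsFractionRing A K]
    [IsFractionRing B L] [Algebra.IsIntegral A B] (hAB : Function.Injective (algebraMap A B)) :
    ∃ C : Subalgebra A B, ∀ (F : Type u) [Field F] (j : C →+* F)
      (_ : ∀ x : F, ∃ c d : C, x = j c / j d) (f : K →+* F) (g : F →+* L)
      (_ : ∀ a, f (algebraMap A K a) = j (algebraMap A C a))
      (_ : ∀ c : C, g (j c) = algebraMap B L c),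
      (letI := g.toAlgebra; IsPurelyInseparable F L) ∧
      (letI := f.toAlgebra; Algebra.IsSeparable K F) := by
  let i : A →+* L := (algebraMap B L).comp (algebraMap A B)
  have hi : Function.Injective i := (IsFractionRing.injective B L).comp hAB
  let : Algebra A L := i.toAlgebra
  have : IsScalarTower A B L := .of_algebraMap_eq fun _ => rfl
  let : Algebra K L := (IsFractionRing.lift hi).toAlgebra
  have : IsScalarTower A K L := .of_algebraMap_eq fun a => (IsFractionRing.lift_algebraMap hi a).symm
  have : FaithfulSMul A B := (faithfulSMul_iff_algebraMap_injective A B).2 hAB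
  have hden : ∀ e : L, ∃ (b : B) (a : A), a ≠ 0 ∧ e = algebraMap B L b / algebraMap A L a := by
    intro e
    obtain ⟨b, s, hs, rfl⟩ := IsFractionRing.div_surjective (A := B) e
    obtain ⟨r, hr, t, ht⟩ := (Algebra.IsAlgebraic.isAlgebraic (R := A) s).exists_nonzero_dvd hs
    refine ⟨b * t, r, hr, ?_⟩
    have h1 : algebraMap A L r = algebraMap B L s * algebraMap B L t := by
      rw [IsScalarTower.algebraMap_apply A B L, ht, map_mul]
    have h2 : algebraMap A L r ≠ 0 := by
      intro h; exact hr (hi (by rw [map_zero]; exact h))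
    have ht0 : algebraMap B L t ≠ 0 := by
      intro h; rw [h, mul_zero] at h1; exact h2 h1
    rw [h1, map_mul, mul_div_mul_right _ _ ht0]
  have halg : Algebra.IsAlgebraic K L := by
    have : Algebra.IsIntegral K L := ⟨fun e => by
      obtain ⟨b, a, ha, rfl⟩ := hden e
      have hb : IsIntegral A (algebraMap B L b) :=
        (Algebra.IsIntegral.isIntegral (R := A) b).map (IsScalarTower.toAlgHom A B L)
      rw [div_eq_mul_inv, IsScalarTower.algebraMap_apply A K L, ← map_inv₀]
      exact hb.tower_top.mul isIntegral_algebraMap⟩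
    infer_instance
  refine ⟨((separableClosure K L).toSubalgebra.restrictScalars A).comap
    (IsScalarTower.toAlgHom A B L), ?_⟩
  intro F _ j hj f g hf hg
  let := f.toAlgebra
  let := g.toAlgebra
  have hfg : g.comp f = algebraMap K L := by
    apply IsLocalization.ringHom_ext (nonZeroDivisors A)
    ext a
    simp only [RingHom.comp_apply, hf, hg, ← IsScalarTower.algebraMap_apply A K L]
    rfl
  have : IsScalarTower K F L := .of_algebraMap_eq fun a => (DFunLike.congr_fun hfg a).symm
  constructor
  · obtain ⟨q, hq⟩ := ExpChar.exists K
    have : ExpChar F q := expChar_of_injective_ringHom f.injective q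
    rw [isPurelyInseparable_iff_pow_mem F q]
    intro x
    have : ExpChar (separableClosure K L) q :=
      expChar_of_injective_ringHom (algebraMap K (separableClosure K L)).injective q
    obtain ⟨n, ⟨e, he⟩⟩ := IsPurelyInseparable.pow_mem (separableClosure K L) q x
    refine ⟨n, ?_⟩
    rw [← he]
    obtain ⟨b, a, ha, hba⟩ := hden (e : L)
    have ha' : algebraMap A L a ≠ 0 := by
      intro h; exact ha (hi (by rw [map_zero]; exact h))
    have hb : algebraMap B L b ∈ separableClosure K L := by
      have : algebraMap B L b = e * algebraMap A L a := by
        rw [hba, div_mul_cancel₀ _ ha']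
      rw [this, IsScalarTower.algebraMap_apply A K L]
      exact mul_mem e.2 (algebraMap_mem _ _)
    refine ⟨j ⟨b, hb⟩ / f (algebraMap A K a), ?_⟩
    change g _ = (e : L)
    rw [map_div₀, hg, hba, hf, hg]
    rfl
  · refine ⟨fun x => ?_⟩
    apply IsSeparable.tower_bot (E := L)
    rw [← mem_separableClosure_iff]
    obtain ⟨c, d, rfl⟩ := hj x
    change g _ ∈ _
    rw [map_div₀, hg, hg]
    exact div_mem c.2 d.2

lemma aux_generic {X Y : Scheme.{u}} [IsIntegral X] [IsIntegral Y] (f : X ⟶ Y) [IsDominant f] :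
    f.base (genericPoint X) = genericPoint Y := by
  apply ((genericPoint_spec Y).eq _).symm
  have := (genericPoint_spec X).image f.continuous
  rwa [Set.image_univ, f.denseRange.closure_range] at this

lemma aux_germ {X Y : Scheme.{u}} (f : X ⟶ Y) (x : X) (y : Y) (h : f.base x = y)
    (h' : Y.presheaf.stalk y = Y.presheaf.stalk (f.base x)) (s : Γ(Y, ⊤)) :
    (eqToHom h' ≫ f.stalkMap x).hom (Y.presheaf.germ ⊤ y trivial s) =
      X.presheaf.germ ⊤ x trivial (f.appTop s) := by
  subst h
  simp only [eqToHom_refl, Category.id_comp]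
  exact Scheme.Hom.germ_stalkMap_apply f ⊤ x trivial s

lemma aux_affine {X Y : Scheme.{u}} [IsIntegral X] [IsIntegral Y] [IsAffine X] [IsAffine Y]
    [IsLocallyNoetherian Y] (ψ : X ⟶ Y) [IsFinite ψ] [IsDominant ψ] :
    ∃ (Z : Scheme.{u}) (φ₁ : X ⟶ Z) (φ₂ : Z ⟶ Y) (_ : IsIntegral Z)
      (h₁ : φ₁.base (genericPoint X) = genericPoint Z)
      (h₂ : φ₂.base (genericPoint Z) = genericPoint Y),
      IsAffine Z ∧ IsFinite φ₂ ∧ φ₁ ≫ φ₂ = ψ ∧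
            (letI : Algebra Z.functionField X.functionField :=
              ((eqToHom (by rw [h₁]) :
                  Z.functionField ⟶
                    Z.presheaf.stalk (φ₁.base (genericPoint X))) ≫
                φ₁.stalkMap (genericPoint X)).hom.toAlgebra
             IsPurelyInseparable Z.functionField X.functionField) ∧
            (letI : Algebra Y.functionField Z.functionField :=
              ((eqToHom (by rw [h₂]) :
                  Y.functionField ⟶
                    Y.presheaf.stalk (φ₂.base (genericPoint Z))) ≫
                φ₂.stalkMap (genericPoint Z)).hom.toAlgebra
             Algebra.IsSeparable Y.functionField Z.functionField) := by
  have := IsSchemeTheoreticallyDominant.of_isDominant ψ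
  let : Algebra Γ(Y, ⊤) Γ(X, ⊤) := ψ.appTop.hom.toAlgebra
  have hinj : Function.Injective (algebraMap Γ(Y, ⊤) Γ(X, ⊤)) := ψ.app_injective ⊤
  have : Module.Finite Γ(Y, ⊤) Γ(X, ⊤) := ψ.finite_appTop
  have : IsNoetherianRing Γ(Y, ⊤) :=
    IsLocallyNoetherian.component_noetherian ⟨⊤, isAffineOpen_top Y⟩
  have neX : Nonempty (⊤ : X.Opens) := ⟨⟨genericPoint X, trivial⟩⟩
  have neY : Nonempty (⊤ : Y.Opens) := ⟨⟨genericPoint Y, trivial⟩⟩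
  have := functionField_isFractionRing_of_isAffineOpen X ⊤ (isAffineOpen_top X)
  have := functionField_isFractionRing_of_isAffineOpen Y ⊤ (isAffineOpen_top Y)
  obtain ⟨C, hC⟩ := aux_algebra (K := Y.functionField) (L := X.functionField) hinj
  let R : CommRingCat.{u} := CommRingCat.of C
  let i₁ : R ⟶ Γ(X, ⊤) := CommRingCat.ofHom C.val.toRingHom
  let i₂ : Γ(Y, ⊤) ⟶ R := CommRingCat.ofHom (algebraMap Γ(Y, ⊤) C)
  have hi : i₂ ≫ i₁ = ψ.appTop := by ext; rfl
  let φ₁ : X ⟶ Spec R := X.isoSpec.hom ≫ Spec.map i₁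
  let φ₂ : Spec R ⟶ Y := Spec.map i₂ ≫ Y.isoSpec.inv
  have hcomp : φ₁ ≫ φ₂ = ψ := by
    simp only [φ₁, φ₂, Category.assoc, ← Spec.map_comp_assoc, hi]
    rw [← Category.assoc, Iso.comp_inv_eq]
    exact Scheme.isoSpec_hom_naturality ψ
  have : IsDomain R := inferInstanceAs (IsDomain C)
  have : IsDominant (Spec.map i₁) := ⟨by
    change DenseRange (PrimeSpectrum.comap i₁.hom)
    rw [PrimeSpectrum.denseRange_comap_iff_ker_le_nilRadical]
    have : Function.Injective i₁.hom := Subtype.val_injective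
    rw [(RingHom.injective_iff_ker_eq_bot _).1 this]
    exact bot_le⟩
  have : IsDominant φ₁ := inferInstance
  have : IsDominant (φ₁ ≫ φ₂) := by rw [hcomp]; infer_instance
  have : IsDominant φ₂ := IsDominant.of_comp φ₁ φ₂
  have hfin : IsFinite φ₂ := by
    have : IsFinite (Spec.map i₂) := by
      rw [IsFinite.SpecMap_iff]
      have : Module.Finite Γ(Y, ⊤) (Subalgebra.toSubmodule C) := inferInstance
      exact this
    infer_instance
  have neR : Nonempty (⊤ : (Spec R).Opens) := ⟨⟨genericPoint (Spec R), trivial⟩⟩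
  have := functionField_isFractionRing_of_isAffineOpen (Spec R) ⊤ (isAffineOpen_top _)
  have e₁ : ∀ c : R, φ₁.appTop ((Scheme.ΓSpecIso R).inv c) = i₁ c := by
    intro c
    have : (Scheme.ΓSpecIso R).inv ≫ φ₁.appTop = i₁ := by
      simp [φ₁, Scheme.isoSpec]
    rw [← this]; rfl
  have e₂ : ∀ c, φ₂.appTop c = (Scheme.ΓSpecIso R).inv (i₂ c) := by
    intro c
    have : φ₂.appTop = i₂ ≫ (Scheme.ΓSpecIso R).inv := by
      rw [Scheme.ΓSpecIso_inv_naturality]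
      have h : (φ₂ ≫ Y.isoSpec.hom).appTop = (Spec.map i₂).appTop := by simp [φ₂]
      have h' : Y.isoSpec.hom.appTop = (Scheme.ΓSpecIso _).hom := by simp [Scheme.isoSpec]
      rw [← h, Scheme.Hom.comp_appTop φ₂ Y.isoSpec.hom, h', Iso.inv_hom_id_assoc]
    rw [this]; rfl
  refine ⟨Spec R, φ₁, φ₂, inferInstance, aux_generic φ₁, aux_generic φ₂, inferInstance, hfin,
    hcomp, ?_⟩
  refine hC (Spec R).functionField
    ((algebraMap Γ(Spec R, ⊤) (Spec R).functionField).comp (Scheme.ΓSpecIso R).inv.hom) ?_ _ _ ?_ ?_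
  · intro x
    obtain ⟨c, d, hd, rfl⟩ := IsFractionRing.div_surjective (A := Γ(Spec R, ⊤)) x
    refine ⟨(Scheme.ΓSpecIso R).hom c, (Scheme.ΓSpecIso R).hom d, ?_⟩
    simp
  · intro a
    refine (aux_germ φ₂ _ _ (aux_generic φ₂) _ a).trans ?_
    rw [e₂]; rfl
  · intro c
    refine (aux_germ φ₁ _ _ (aux_generic φ₁) _ _).trans ?_
    rw [e₁]; rfl


/-- Let `k` be an algebraically closed field, let `U` and `U'` be integral
`k`-varieties (integral separated `k`-schemes of finite type) and let `φ : U' → U` be a finite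
surjective morphism.  Then there are a nonempty affine open `W ⊆ U`, a nonempty affine open
`W' ⊆ U'` with `φ(W') ⊆ W`, an integral affine `k`-variety `W''` and `k`-morphisms
`φ₁ : W' → W''`, `φ₂ : W'' → W` such that the restriction of `φ` to `W'` equals `φ₂ ∘ φ₁`, the
function field extension `k(W'') ↪ k(W')` induced by `φ₁` is purely inseparable, and the
function field extension `k(W) ↪ k(W'')` induced by `φ₂` is separable. -/
theorem exists_affine_opens_factorization_purelyInseparable_separable
    {k : Type u} [Field k] [IsAlgClosed k]
    (U U' : Scheme.{u})
    (sU : U ⟶ Spec (CommRingCat.of k)) (sU' : U' ⟶ Spec (CommRingCat.of k))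
    [IsIntegral U] [IsIntegral U']
    [IsSeparated sU] [LocallyOfFiniteType sU] [QuasiCompact sU]
    [IsSeparated sU'] [LocallyOfFiniteType sU'] [QuasiCompact sU']
    (φ : U' ⟶ U) [IsFinite φ] [Surjective φ] (hφk : φ ≫ sU = sU') :
    ∃ (W : U.Opens) (W' : U'.Opens),
      (W : Set U).Nonempty ∧ (W' : Set U').Nonempty ∧
      IsAffineOpen W ∧ IsAffineOpen W' ∧
      -- the image of `W'` under `φ` is contained in `W`
      φ.base '' (W' : Set U') ⊆ (W : Set U) ∧
      ∃ (W'' : Scheme.{u}) (sW'' : W'' ⟶ Spec (CommRingCat.of k))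
        (φ₁ : W'.toScheme ⟶ W'') (φ₂ : W'' ⟶ W.toScheme),
        -- `W''` is an integral affine `k`-variety
        IsAffine W'' ∧ IsSeparated sW'' ∧ LocallyOfFiniteType sW'' ∧ QuasiCompact sW'' ∧
        -- `φ₁` and `φ₂` are morphisms of `k`-schemes
        φ₁ ≫ sW'' = W'.ι ≫ sU' ∧ φ₂ ≫ W.ι ≫ sU = sW'' ∧
        -- the restriction of `φ` to `W'` equals `φ₂ ∘ φ₁`
        φ₁ ≫ φ₂ ≫ W.ι = W'.ι ≫ φ ∧
        ∃ (hW : IsIntegral W.toScheme) (hW' : IsIntegral W'.toScheme) (hW'' : IsIntegral W''),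
          letI := hW
          letI := hW'
          letI := hW''
          -- `φ₁` and `φ₂` are dominant: generic points map to generic points, so that they
          -- induce extensions of function fields
          ∃ (h₁ : φ₁.base (genericPoint W'.toScheme) = genericPoint W'')
            (h₂ : φ₂.base (genericPoint W'') = genericPoint W.toScheme),
            -- the extension `k(W'') ↪ k(W')` induced by `φ₁` is purely inseparable
            (letI : Algebra W''.functionField W'.toScheme.functionField :=
              ((eqToHom (by rw [h₁]) :
                  W''.functionField ⟶
                    W''.presheaf.stalk (φ₁.base (genericPoint W'.toScheme))) ≫
                φ₁.stalkMap (genericPoint W'.toScheme)).hom.toAlgebra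
             IsPurelyInseparable W''.functionField W'.toScheme.functionField) ∧
            -- the extension `k(W) ↪ k(W'')` induced by `φ₂` is separable
            (letI : Algebra W.toScheme.functionField W''.functionField :=
              ((eqToHom (by rw [h₂]) :
                  W.toScheme.functionField ⟶
                    W.toScheme.presheaf.stalk (φ₂.base (genericPoint W''))) ≫
                φ₂.stalkMap (genericPoint W'')).hom.toAlgebra
             Algebra.IsSeparable W.toScheme.functionField W''.functionField) := by
  have : IsLocallyNoetherian U := LocallyOfFiniteType.isLocallyNoetherian sU
  obtain ⟨W, hW, hxW⟩ : ∃ W : U.Opens, IsAffineOpen W ∧ genericPoint U ∈ W := by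
    obtain ⟨_, ⟨W, hW, rfl⟩, hxW, -⟩ := U.isBasis_affineOpens.exists_subset_of_mem_open
      (Set.mem_univ (genericPoint U)) isOpen_univ
    exact ⟨W, hW, hxW⟩
  have hW' : IsAffineOpen (φ ⁻¹ᵁ W) := hW.preimage φ
  obtain ⟨x', hx'⟩ := φ.surjective (genericPoint U)
  have hxW' : x' ∈ φ ⁻¹ᵁ W := by
    change φ x' ∈ W
    rw [hx']; exact hxW
  have : Nonempty W := ⟨⟨_, hxW⟩⟩
  have : Nonempty (φ ⁻¹ᵁ W : U'.Opens) := ⟨⟨_, hxW'⟩⟩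
  have : IsAffine W.toScheme := hW
  have : IsAffine (φ ⁻¹ᵁ W).toScheme := hW'
  have : Surjective (φ ∣_ W) := IsZariskiLocalAtTarget.restrict ‹_› W
  obtain ⟨Z, φ₁, φ₂, hZ, h₁, h₂, hZa, hfin, hc, hp, hs⟩ := aux_affine (φ ∣_ W)
  have hι : φ₁ ≫ φ₂ ≫ W.ι = (φ ⁻¹ᵁ W).ι ≫ φ := by
    rw [← Category.assoc, hc, morphismRestrict_ι]
  refine ⟨W, φ ⁻¹ᵁ W, ⟨_, hxW⟩, ⟨_, hxW'⟩, hW, hW', ?_, Z, φ₂ ≫ W.ι ≫ sU, φ₁, φ₂, hZa,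
    inferInstance, inferInstance, inferInstance, ?_, rfl, hι, inferInstance, inferInstance, hZ,
    h₁, h₂, hp, hs⟩
  · rintro _ ⟨x, hx, rfl⟩
    exact hx
  · rw [← hφk, ← Category.assoc φ₂, ← Category.assoc φ₁, hι, Category.assoc]
end

section
/- Let k be an algebraically closed field, let V and V' be integral projective k-varieties with V normal (all local rings of V are integrally closed domains), and let φ : V' → V be a finite surjective morphism. Let d denote the separable degree of the function field extension k(V) ↪ k(V') induced by φ. Then for every point x of the underlying topological space of V, the fiber φ⁻¹(x) ⊆ V' contains at most d points. -/
open AlgebraicGeometry CategoryTheory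

universe u

/-- Projective `n`-space over `k`, realized as `Proj k[X₀, …, Xₙ]`. -/
noncomputable def ProjectiveSpace (k : Type u) [Field k] (n : ℕ) : Scheme.{u} :=
  letI := MvPolynomial.gradedAlgebra (σ := Fin (n + 1)) (R := k)
  AlgebraicGeometry.Proj (MvPolynomial.homogeneousSubmodule (Fin (n + 1)) k)

/-- A scheme `V` with structure morphism `sV` to `Spec k` is projective over `k` if it admits a
closed immersion into some projective space over `k`, compatibly with the structure morphisms. -/
def IsProjectiveOver {k : Type u} [Field k] (V : Scheme.{u})
    (sV : V ⟶ Spec (CommRingCat.of k)) : Prop :=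
  ∃ (n : ℕ) (ι : V ⟶ ProjectiveSpace k n) (p : ProjectiveSpace k n ⟶ Spec (CommRingCat.of k)),
    IsClosedImmersion ι ∧ ι ≫ p = sV

open Polynomial in
theorem alg_cover {A B K L N : Type*} [CommRing A] [IsDomain A] [IsIntegrallyClosed A]
    [CommRing B] [IsDomain B] [Field K] [Field L] [Field N] [IsAlgClosed N]
    [Algebra A B] [Algebra A K] [Algebra A L] [Algebra A N] [Algebra B L] [Algebra K L]
    [Algebra K N] [IsScalarTower A B L] [IsScalarTower A K L] [IsScalarTower A K N]
    [IsFractionRing A K] [IsFractionRing B L] [Algebra.IsIntegral A B]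
    [FiniteDimensional K L] (p : Ideal A) [p.IsPrime] :
    ∃ F : (L →ₐ[K] N) → Ideal B,
      ∀ q : Ideal B, q.IsPrime → q.comap (algebraMap A B) = p → ∃ f, F f = q := by
  classical
  let C := integralClosure A N
  have hinjK : Function.Injective (algebraMap A K) := IsFractionRing.injective A K
  have hinjN : Function.Injective (algebraMap A N) := by
    rw [IsScalarTower.algebraMap_eq A K N]
    exact (algebraMap K N).injective.comp hinjK
  have hinjC : Function.Injective (algebraMap A C) := by
    intro a b h
    exact hinjN (congrArg (Subtype.val) h)
  obtain ⟨Q, hQ, hQp⟩ := Ideal.exists_ideal_over_prime_of_isIntegral_of_isDomain (S := C) p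
    (by rw [(RingHom.injective_iff_ker_eq_bot _).1 hinjC]; exact bot_le)
  have hint : ∀ (f : L →ₐ[K] N) (b : B), f (algebraMap B L b) ∈ C := fun f b =>
    ((Algebra.IsIntegral.isIntegral (R := A) b).map (IsScalarTower.toAlgHom A B L)).map
      (f.restrictScalars A)
  let g : (L →ₐ[K] N) → (B →ₐ[A] C) := fun f =>
    ((f.restrictScalars A).comp (IsScalarTower.toAlgHom A B L)).codRestrict C (hint f)
  refine ⟨fun f => Q.comap (g f), fun q hq hqp => ?_⟩
  have key : ∃ f ∈ (Finset.univ : Finset (L →ₐ[K] N)), q ≤ Q.comap (g f) := by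
    have f0 : L →ₐ[K] N := IsAlgClosed.lift
    refine (Ideal.subset_union_prime f0 f0 (fun f _ _ _ => Ideal.comap_isPrime (g f) Q)).1 ?_
    intro b hb
    by_contra hcon
    simp only [Finset.coe_univ, Set.mem_univ, Set.iUnion_true, Set.mem_iUnion, not_exists,
      SetLike.mem_coe, Ideal.mem_comap] at hcon
    have hbi : IsIntegral A b := Algebra.IsIntegral.isIntegral b
    set m := minpoly A b with hm
    have hmK : minpoly K (algebraMap B L b) = m.map (algebraMap A K) :=
      minpoly.isIntegrallyClosed_eq_field_fractions K L hbi
    have h0 : m.coeff 0 ∈ p := by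
      rw [← hqp, Ideal.mem_comap]
      have h1 : aeval b m = 0 := minpoly.aeval A b
      rw [← divX_mul_X_add m] at h1
      simp only [map_add, map_mul, aeval_X, aeval_C] at h1
      rw [eq_neg_of_add_eq_zero_right h1]
      exact q.neg_mem (q.mul_mem_left _ hb)
    have h0Q : algebraMap A C (m.coeff 0) ∈ Q := by rwa [← Ideal.mem_comap, hQp]
    let S : Submonoid N := Q.primeCompl.map C.val
    have hsp := IsAlgClosed.splits (m.map (algebraMap A N))
    have hc := hsp.coeff_zero_eq_prod_roots_of_monic ((minpoly.monic hbi).map _)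
    have hS : (m.map (algebraMap A N)).roots.prod ∈ S := by
      refine Submonoid.multiset_prod_mem _ _ fun z hz => ?_
      have hz' : aeval z (minpoly K (algebraMap B L b)) = 0 := by
        rw [hmK, aeval_map_algebraMap]
        have := (mem_roots'.1 hz).2
        rwa [IsRoot.def, eval_map_algebraMap] at this
      obtain ⟨f, hf⟩ := IntermediateField.exists_algHom_of_splits_of_aeval
        (K := N) (E := L) (F := K)
        (fun s => ⟨Algebra.IsIntegral.isIntegral s, IsAlgClosed.splits _⟩) hz'
      exact ⟨g f b, hcon f, hf⟩
    obtain ⟨c, hcQ, hcv⟩ := hS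
    rw [← hcv, coeff_map] at hc
    have hc' : algebraMap A C (m.coeff 0) = (-1) ^ (m.map (algebraMap A N)).natDegree * c := by
      apply Subtype.ext
      simpa using hc
    rw [hc'] at h0Q
    rcases hQ.mem_or_mem h0Q with h | h
    · exact hQ.ne_top (Ideal.eq_top_of_isUnit_mem _ h ((isUnit_one.neg).pow _))
    · exact hcQ h
  obtain ⟨f, -, hf⟩ := key
  refine ⟨f, ?_⟩
  by_contra hne
  have hlt := Ideal.IsIntegral.comap_lt_comap (R := A) (lt_of_le_of_ne hf (Ne.symm hne))
  have : (Q.comap (g f)).comap (algebraMap A B) = p := by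
    rw [← hQp]
    ext a
    simp only [Ideal.mem_comap, AlgHom.commutes]
  exact hlt.ne (hqp.trans this.symm)

theorem alg_main {A B K L : Type*} [CommRing A] [IsDomain A] [IsIntegrallyClosed A]
    [CommRing B] [IsDomain B] [Field K] [Field L]
    [Algebra A B] [Algebra A K] [Algebra A L] [Algebra B L] [Algebra K L]
    [IsScalarTower A B L] [IsScalarTower A K L]
    [IsFractionRing A K] [IsFractionRing B L] [Module.Finite A B]
    (p : Ideal A) [p.IsPrime] :
    {q : Ideal B | q.IsPrime ∧ q.comap (algebraMap A B) = p}.Finite ∧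
    {q : Ideal B | q.IsPrime ∧ q.comap (algebraMap A B) = p}.ncard ≤ Field.finSepDegree K L := by
  have hinj : Function.Injective (algebraMap A L) := by
    rw [IsScalarTower.algebraMap_eq A K L]
    exact (algebraMap K L).injective.comp (IsFractionRing.injective A K)
  have hfd : FiniteDimensional K L := by
    obtain ⟨s, hs⟩ := (Module.Finite.fg_top : (⊤ : Submodule A B).FG)
    have h1 := IsFractionRing.ideal_span_singleton_map_subset A (K := K) (L := L) (a := (1 : B))
      (b := (s : Set B)) hinj (by rw [hs]; exact fun _ _ => trivial)
    have : Nontrivial A := inferInstance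
    refine Module.finite_def.2 (Submodule.fg_def.2
      ⟨algebraMap B L '' s, s.finite_toSet.image _, ?_⟩)
    rw [eq_top_iff]
    intro x _
    exact h1 (Ideal.mem_span_singleton.2 (by rw [map_one]; exact one_dvd x))
  obtain ⟨F, hF⟩ := alg_cover (A := A) (B := B) (K := K) (L := L) (N := AlgebraicClosure L) p
  have hsub : {q : Ideal B | q.IsPrime ∧ q.comap (algebraMap A B) = p} ⊆ Set.range F :=
    fun q hq => hF q hq.1 hq.2
  have hfin : (Set.range F).Finite := Set.finite_range F
  refine ⟨hfin.subset hsub, (Set.ncard_le_ncard hsub hfin).trans ?_⟩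
  rw [← Set.image_univ]
  refine (Set.ncard_image_le Set.finite_univ).trans ?_
  rw [Set.ncard_univ]
  rfl

theorem isIntegrallyClosed_section (V : Scheme.{u}) [IsIntegral V]
    (h : ∀ x : V, IsIntegrallyClosed (V.presheaf.stalk x)) (U : V.Opens) (hU : IsAffineOpen U)
    [Nonempty U] : IsIntegrallyClosed Γ(V, U) := by
  refine IsIntegrallyClosed.of_localization_maximal fun P _ hP => ?_
  let y : PrimeSpectrum Γ(V, U) := ⟨P, hP.isPrime⟩
  have hy : hU.fromSpec y ∈ U := (hU.isoSpec.inv y).2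
  letI := TopCat.Presheaf.algebra_section_stalk V.presheaf (⟨hU.fromSpec y, hy⟩ : U)
  have h2 : IsLocalization.AtPrime (V.presheaf.stalk (hU.fromSpec y)) P :=
    hU.isLocalization_stalk' y hy
  have h3 := h (hU.fromSpec y)
  exact IsIntegrallyClosed.of_equiv (IsLocalization.algEquiv P.primeCompl
    (V.presheaf.stalk (hU.fromSpec y)) (Localization.AtPrime P)).toRingEquiv

theorem germ_eqToHom (V : Scheme.{u}) (U : V.Opens) (x y : V) (h : x = y) (hx : x ∈ U)
    (hy : y ∈ U) (e : V.presheaf.stalk x = V.presheaf.stalk y) :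
    V.presheaf.germ U x hx ≫ eqToHom e = V.presheaf.germ U y hy := by
  subst h
  simp

/-- Let `k` be an algebraically closed field, let `V` and `V'` be integral
projective `k`-varieties (separated `k`-schemes of finite type) with `V` normal, and let
`φ : V' → V` be a finite surjective morphism.  If `d` is the separable degree of the induced
function field extension `k(V) ↪ k(V')`, then every fiber of `φ` contains at most `d` points. -/
theorem fiber_card_le_sepDegree_of_finite_surjective
    {k : Type u} [Field k] [IsAlgClosed k]
    (V V' : Scheme.{u})
    (sV : V ⟶ Spec (CommRingCat.of k)) (sV' : V' ⟶ Spec (CommRingCat.of k))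
    [IsIntegral V] [IsIntegral V']
    [IsSeparated sV] [LocallyOfFiniteType sV] [QuasiCompact sV]
    [IsSeparated sV'] [LocallyOfFiniteType sV'] [QuasiCompact sV']
    (hVproj : IsProjectiveOver V sV) (hV'proj : IsProjectiveOver V' sV')
    (hVnormal : ∀ x : V, IsDomain (V.presheaf.stalk x) ∧
      IsIntegrallyClosed (V.presheaf.stalk x))
    (φ : V' ⟶ V) [IsFinite φ] [Surjective φ] (hφk : φ ≫ sV = sV') :
    -- the generic point of `V'` maps to the generic point of `V`, so that `φ` induces an
    -- extension of function fields `k(V) ↪ k(V')`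
    have hgen : φ.base (genericPoint V') = genericPoint V := by
      refine ((genericPoint_spec V).eq ?_).symm
      rw [isGenericPoint_def]
      apply Set.eq_univ_of_univ_subset
      have h1 : φ.base '' closure {genericPoint V'} ⊆ closure (φ.base '' {genericPoint V'}) :=
        image_closure_subset_closure_image (by fun_prop)
      rw [(genericPoint_spec V').def, Set.image_univ, Set.image_singleton] at h1
      exact (φ.surjective.range_eq ▸ h1 : Set.univ ⊆ _)
    letI : Algebra V.functionField V'.functionField :=
      ((eqToHom (by rw [hgen]) :
          V.functionField ⟶ V.presheaf.stalk (φ.base (genericPoint V'))) ≫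
        φ.stalkMap (genericPoint V')).hom.toAlgebra
    ∀ x : V, (φ.base ⁻¹' {x}).Finite ∧
      (φ.base ⁻¹' {x}).ncard ≤ Field.finSepDegree V.functionField V'.functionField := by
  intro hgen
  letI : Algebra V.functionField V'.functionField :=
      ((eqToHom (by rw [hgen]) :
          V.functionField ⟶ V.presheaf.stalk (φ.base (genericPoint V'))) ≫
        φ.stalkMap (genericPoint V')).hom.toAlgebra
  intro x
  obtain ⟨_, ⟨U, hU, rfl⟩, hxU, -⟩ :=
    V.isBasis_affineOpens.exists_subset_of_mem_open (Set.mem_univ x) isOpen_univ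
  replace hU : IsAffineOpen U := hU
  have hW : IsAffineOpen (φ ⁻¹ᵁ U) := hU.preimage φ
  obtain ⟨y0, hy0⟩ := φ.surjective x
  haveI : Nonempty U := ⟨⟨x, hxU⟩⟩
  haveI : Nonempty (φ ⁻¹ᵁ U : V'.Opens) := ⟨⟨y0, by change φ.base y0 ∈ U; rw [hy0]; exact hxU⟩⟩
  haveI := functionField_isFractionRing_of_isAffineOpen V U hU
  haveI := functionField_isFractionRing_of_isAffineOpen V' (φ ⁻¹ᵁ U) hW
  haveI := isIntegrallyClosed_section V (fun x => (hVnormal x).2) U hU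
  letI : Algebra Γ(V, U) Γ(V', φ ⁻¹ᵁ U) := (φ.app U).hom.toAlgebra
  haveI : Module.Finite Γ(V, U) Γ(V', φ ⁻¹ᵁ U) := φ.finite_app U hU
  letI : Algebra Γ(V, U) V'.functionField :=
    ((algebraMap Γ(V', φ ⁻¹ᵁ U) V'.functionField).comp (φ.app U).hom).toAlgebra
  haveI : IsScalarTower Γ(V, U) Γ(V', φ ⁻¹ᵁ U) V'.functionField :=
    IsScalarTower.of_algebraMap_eq' rfl
  have hg : genericPoint V ∈ U :=
    ((genericPoint_spec V).mem_open_set_iff U.isOpen).mpr ⟨x, by simpa using hxU⟩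
  have hg' : φ (genericPoint V') ∈ U := by
    change φ.base (genericPoint V') ∈ U
    rw [hgen]; exact hg
  haveI : IsScalarTower Γ(V, U) V.functionField V'.functionField := by
    refine IsScalarTower.of_algebraMap_eq' ?_
    change (φ.app U ≫ V'.presheaf.germ (φ ⁻¹ᵁ U) (genericPoint V') hg').hom =
      (V.presheaf.germ U (genericPoint V) hg ≫ (eqToHom _ ≫ φ.stalkMap (genericPoint V'))).hom
    rw [← Category.assoc, germ_eqToHom V U _ _ hgen.symm hg hg', Scheme.Hom.germ_stalkMap]
  obtain ⟨h1, h2⟩ := alg_main (A := Γ(V, U)) (B := Γ(V', φ ⁻¹ᵁ U)) (K := V.functionField)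
    (L := V'.functionField) (hU.primeIdealOf ⟨x, hxU⟩).asIdeal
  have hsub : φ.base ⁻¹' {x} ⊆ (fun q : PrimeSpectrum Γ(V', φ ⁻¹ᵁ U) => hW.fromSpec q) ''
      (PrimeSpectrum.asIdeal ⁻¹' {q : Ideal Γ(V', φ ⁻¹ᵁ U) | q.IsPrime ∧
        q.comap (algebraMap Γ(V, U) Γ(V', φ ⁻¹ᵁ U)) = (hU.primeIdealOf ⟨x, hxU⟩).asIdeal}) := by
    rintro y rfl
    refine ⟨hW.primeIdealOf ⟨y, hxU⟩, ⟨PrimeSpectrum.isPrime _, ?_⟩, hW.fromSpec_primeIdealOf ⟨y, hxU⟩⟩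
    have := IsAffineOpen.comap_primeIdealOf_appLE U hU (φ ⁻¹ᵁ U) hW le_rfl hxU
    rw [← Scheme.Hom.app_eq_appLE] at this
    exact congrArg PrimeSpectrum.asIdeal this
  have hinj : Function.Injective (PrimeSpectrum.asIdeal (R := Γ(V', φ ⁻¹ᵁ U))) :=
    fun a b h => PrimeSpectrum.ext h
  have hf := h1.preimage (f := PrimeSpectrum.asIdeal) hinj.injOn
  refine ⟨(hf.image _).subset hsub, (Set.ncard_le_ncard hsub (hf.image _)).trans
    ((Set.ncard_image_le hf).trans (le_trans ?_ h2))⟩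
  rw [← Set.ncard_image_of_injective _ hinj]
  exact Set.ncard_le_ncard (Set.image_preimage_subset _ _) h1
end

section
/- Let k be an algebraically closed field, let V and V' be integral projective k-varieties with V normal, and let φ : V' → V be a finite surjective morphism. Let d denote the separable degree of the function field extension k(V) ↪ k(V') induced by φ. Then there exists a nonempty (hence dense) Zariski-open subset U₀ of V such that for every closed point x of U₀, the fiber φ⁻¹(x) contains exactly d points. -/
open AlgebraicGeometry CategoryTheory

universe u

open Polynomial
open scoped nonZeroDivisors

theorem aux_inj (A B K L : Type*) [CommRing A] [IsDomain A] [CommRing B] [IsDomain B]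
  [Algebra A B] [Field K] [Field L] [Algebra A K] [IsFractionRing A K]
  [Algebra B L] [IsFractionRing B L] [Algebra K L] [Algebra A L] [IsScalarTower A K L]
  [IsScalarTower A B L] : Function.Injective (algebraMap A B) := by
  have h : Function.Injective (algebraMap A L) := by
    rw [IsScalarTower.algebraMap_eq A K L]
    exact (algebraMap K L).injective.comp (IsFractionRing.injective A K)
  rw [IsScalarTower.algebraMap_eq A B L] at h
  exact Function.Injective.of_comp h

theorem aux_clear (A B K L : Type*) [CommRing A] [IsDomain A] [CommRing B] [IsDomain B]
  [Algebra A B] [Module.Finite A B] [Field K] [Field L] [Algebra A K] [IsFractionRing A K]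
  [Algebra B L] [IsFractionRing B L] [Algebra K L] [Algebra A L] [IsScalarTower A K L]
  [IsScalarTower A B L] (x : L) : ∃ a : A, a ≠ 0 ∧ ∃ b : B, algebraMap A L a * x = algebraMap B L b := by
  obtain ⟨b, s, hs, rfl⟩ := IsFractionRing.div_surjective (A := B) x
  have hinj := aux_inj A B K L
  have := (faithfulSMul_iff_algebraMap_injective A B).2 hinj
  have hs0 : s ≠ 0 := nonZeroDivisors.ne_zero hs
  have halg : IsAlgebraic A s := (Algebra.IsIntegral.isIntegral (R := A) s).isAlgebraic
  obtain ⟨r, hr, t, ht⟩ := halg.exists_nonzero_dvd hs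
  refine ⟨r, hr, t * b, ?_⟩
  rw [IsScalarTower.algebraMap_apply A B L, ht]
  have : algebraMap B L s ≠ 0 := by simpa using hs0
  simp only [map_mul]
  field_simp

theorem aux_fin (A B K L : Type*) [CommRing A] [IsDomain A] [CommRing B] [IsDomain B]
  [Algebra A B] [Module.Finite A B] [Field K] [Field L] [Algebra A K] [IsFractionRing A K]
  [Algebra B L] [IsFractionRing B L] [Algebra K L] [Algebra A L] [IsScalarTower A K L]
  [IsScalarTower A B L] : Module.Finite K L := by
  obtain ⟨s, hs⟩ := Module.Finite.fg_top (R := A) (M := B)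
  classical
  refine ⟨⟨s.image (algebraMap B L), ?_⟩⟩
  rw [eq_top_iff]
  rintro x -
  obtain ⟨a, ha, b, hb⟩ := aux_clear A B K L x
  have key : ∀ b, algebraMap B L b ∈ Submodule.span K (s.image (algebraMap B L) : Set L) := by
    intro b
    have hb' : b ∈ Submodule.span A (s : Set B) := hs ▸ trivial
    induction hb' using Submodule.span_induction with
    | mem x hx => exact Submodule.subset_span (by
        rw [Finset.coe_image]; exact ⟨x, hx, rfl⟩)
    | zero => simp
    | add x y _ _ h1 h2 => rw [map_add]; exact add_mem h1 h2
    | smul c x _ h =>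
      rw [Algebra.smul_def, map_mul, ← IsScalarTower.algebraMap_apply A B L,
        IsScalarTower.algebraMap_apply A K L, ← Algebra.smul_def]
      exact Submodule.smul_mem _ _ h
  have h0 : algebraMap A K a ≠ 0 := by simpa using ha
  have : x = (algebraMap A K a)⁻¹ • algebraMap B L b := by
    rw [← hb, Algebra.smul_def, IsScalarTower.algebraMap_apply A K L, ← mul_assoc, ← map_mul,
      inv_mul_cancel₀ h0]
    simp
  rw [this]
  exact Submodule.smul_mem _ _ (key b)

/-- clear denominators of polynomial -/
theorem aux_poly {A K : Type*} [CommRing A] [IsDomain A] [Field K] [Algebra A K] [IsFractionRing A K]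
   (p : K[X]) : ∃ a : A, a ≠ 0 ∧ ∃ q : A[X], q.map (algebraMap A K) = C (algebraMap A K a) * p := by
  obtain ⟨b, hb', hb⟩ := IsLocalization.integerNormalization_spec A⁰ p
  refine ⟨b, nonZeroDivisors.ne_zero hb', _, hb.trans ?_⟩
  rw [← algebraMap_smul K b p, smul_eq_C_mul]

theorem aux_sep {A K : Type*} [CommRing A] [IsDomain A] [Field K] [Algebra A K] [IsFractionRing A K]
   {g : A[X]} (hg : (g.map (algebraMap A K)).Separable) :
    ∃ c : A, c ≠ 0 ∧ ∃ u v : A[X], u * g + v * derivative g = C c := by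
  obtain ⟨u, v, h⟩ := hg
  obtain ⟨a, ha, u', hu⟩ := aux_poly (A := A) u
  obtain ⟨b, hb, v', hv⟩ := aux_poly (A := A) v
  refine ⟨a * b, mul_ne_zero ha hb, C b * u', C a * v', ?_⟩
  apply Polynomial.map_injective _ (IsFractionRing.injective A K)
  simp only [Polynomial.map_add, Polynomial.map_mul, map_C, hu, hv, map_mul]
  rw [derivative_map] at h
  linear_combination (C (algebraMap A K a) * C (algebraMap A K b)) * h

theorem aux_gen (A B K L : Type*) [CommRing A] [IsDomain A] [CommRing B] [IsDomain B]
  [Algebra A B] [Module.Finite A B] [Field K] [Field L] [Algebra A K] [IsFractionRing A K]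
  [Algebra B L] [IsFractionRing B L] [Algebra K L] [Algebra A L] [IsScalarTower A K L]
  [IsScalarTower A B L] [IsIntegrallyClosed A] (q : ℕ) [ExpChar K q] :
    ∃ b : B, (minpoly A b).natDegree = Field.finSepDegree K L ∧
      ((minpoly A b).map (algebraMap A K)).Separable ∧
      ∀ x : B, ∃ (n : ℕ) (c : A), c ≠ 0 ∧ ∃ h : A[X],
        algebraMap A B c * x ^ (q ^ n) = aeval b h := by
  have hfin := aux_fin A B K L
  have hinj := aux_inj A B K L
  have hfs := (faithfulSMul_iff_algebraMap_injective A B).2 hinj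
  obtain ⟨α, hα⟩ := Field.exists_primitive_element K (separableClosure K L)
  obtain ⟨a, ha, b, hb⟩ := aux_clear A B K L (α : L)
  have ha' : algebraMap A K a ≠ 0 := by simpa using ha
  let β : separableClosure K L := algebraMap K _ (algebraMap A K a) * α
  have hβ : ((β : separableClosure K L) : L) = algebraMap B L b := by
    rw [← hb, IsScalarTower.algebraMap_apply A K L]; rfl
  have hβtop : IntermediateField.adjoin K {β} = ⊤ := by
    rw [eq_top_iff, ← hα, IntermediateField.adjoin_simple_le_iff]
    have : α = algebraMap K _ (algebraMap A K a)⁻¹ * β := by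
      simp only [β]
      rw [← mul_assoc, ← map_mul, inv_mul_cancel₀ ha']; simp
    rw [this]
    exact mul_mem (IntermediateField.algebraMap_mem _ _) (IntermediateField.mem_adjoin_simple_self K β)
  have hmin : minpoly K β = (minpoly A b).map (algebraMap A K) := by
    rw [← minpoly.isIntegrallyClosed_eq_field_fractions K L (Algebra.IsIntegral.isIntegral b), ← hβ]
    exact (minpoly.algebraMap_eq (algebraMap (separableClosure K L) L).injective β).symm
  refine ⟨b, ?_, ?_, ?_⟩
  · have h1 := (Field.primitive_element_iff_minpoly_natDegree_eq K β).1 hβtop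
    rw [hmin, (minpoly.monic (Algebra.IsIntegral.isIntegral b)).natDegree_map] at h1
    rw [h1, Field.finSepDegree_eq]; rfl
  · rw [← hmin]; exact Algebra.IsSeparable.isSeparable K β
  · intro x
    obtain ⟨n, y, hy⟩ := IsPurelyInseparable.pow_mem (separableClosure K L) q (algebraMap B L x)
    have hy' : y ∈ IntermediateField.adjoin K {β} := hβtop ▸ trivial
    obtain ⟨h, hh⟩ : ∃ h : K[X], aeval β h = y := by
      have hint : IsIntegral K β := Algebra.IsIntegral.isIntegral β
      rw [← IntermediateField.mem_toSubalgebra,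
        IntermediateField.adjoin_simple_toSubalgebra_of_isAlgebraic hint.isAlgebraic] at hy'
      exact Algebra.adjoin_mem_exists_aeval _ _ hy'
    obtain ⟨c, hc, h', hh'⟩ := aux_poly (A := A) h
    refine ⟨n, c, hc, h', IsFractionRing.injective B L ?_⟩
    have hβ' : algebraMap (separableClosure K L) L β = algebraMap B L b := hβ
    clear_value β
    rw [map_mul, map_pow, ← hy, ← hh, ← aeval_algebraMap_apply L β h, ← aeval_algebraMap_apply L b h',
      ← aeval_map_algebraMap K _ h', hh', map_mul (aeval (algebraMap B L b)), aeval_C, hβ',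
      ← IsScalarTower.algebraMap_apply A B L, ← IsScalarTower.algebraMap_apply A K L]

theorem aux_pow_inj (A K F : Type*) [CommRing A] [Field K] [Field F] [Algebra A K]
    (hinj : Function.Injective (algebraMap A K)) [Algebra A F] (q n : ℕ) [hq : ExpChar K q] :
    Function.Injective (fun x : F => x ^ q ^ n) := by
  cases hq with
  | zero => intro x y h; simpa using h
  | prime hp =>
    have : Fact q.Prime := ⟨hp⟩
    have : CharP A q := (RingHom.charP_iff (algebraMap A K) hinj q).2 inferInstance
    have h0 : (q : F) = 0 := by
      rw [← map_natCast (algebraMap A F), CharP.cast_eq_zero, map_zero]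
    have : CharP F q := (CharP.charP_iff_prime_eq_zero hp).2 h0
    exact iterateFrobenius_inj F q n

theorem aux_lift {A B F : Type*} [CommRing A] [CommRing B] [Field F] [IsAlgClosed F] [Algebra A B]
    [Algebra A F] [Algebra.IsIntegral A B] (hF : Function.Surjective (algebraMap A F))
    (Q : Ideal B) [Q.IsPrime] (hQ : Q.comap (algebraMap A B) = RingHom.ker (algebraMap A F)) :
    ∃ ψ : B →ₐ[A] F, RingHom.ker ψ = Q := by
  let e : (A ⧸ RingHom.ker (algebraMap A F)) ≃+* F :=
    RingHom.quotientKerEquivOfSurjective hF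
  let i : F →+* B ⧸ Q := (Ideal.quotientMap Q (algebraMap A B) hQ.ge).comp e.symm.toRingHom
  have hi : ∀ a, i (algebraMap A F a) = Ideal.Quotient.mk Q (algebraMap A B a) := by
    intro a
    have : e.symm (algebraMap A F a) = Ideal.Quotient.mk _ a := by
      rw [RingEquiv.symm_apply_eq]; rfl
    simp [i, this]
  let := i.toAlgebra
  have : IsScalarTower A F (B ⧸ Q) := IsScalarTower.of_algebraMap_eq (fun a => (hi a).symm)
  have : Algebra.IsIntegral F (B ⧸ Q) := Algebra.IsIntegral.tower_top A
  let e' : F ≃ₐ[A] (B ⧸ Q) := AlgEquiv.ofBijective (IsScalarTower.toAlgHom A F (B ⧸ Q))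
    IsAlgClosed.algebraMap_bijective_of_isIntegral
  refine ⟨e'.symm.toAlgHom.comp (Ideal.Quotient.mkₐ A Q), ?_⟩
  ext x
  simp [RingHom.mem_ker, Ideal.Quotient.eq_zero_iff_mem]

theorem aux_ext {A B F : Type*} [CommRing A] [CommRing B] [Field F] [Algebra A B]
    [Algebra A F] (hF : Function.Surjective (algebraMap A F))
    (φ ψ : B →ₐ[A] F) (h : RingHom.ker φ = RingHom.ker ψ) : φ = ψ := by
  ext x
  obtain ⟨a, ha⟩ := hF (φ x)
  have : x - algebraMap A B a ∈ RingHom.ker φ := by simp [RingHom.mem_ker, ha]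
  rw [h, RingHom.mem_ker, map_sub, AlgHom.commutes, sub_eq_zero] at this
  rw [this, ha]

theorem aux_extend {A B F : Type*} [CommRing A] [IsDomain A] [IsIntegrallyClosed A]
    [CommRing B] [IsDomain B] [Field F] [IsAlgClosed F] [Algebra A B]
    [Algebra A F] [Algebra.IsIntegral A B] (hAB : Function.Injective (algebraMap A B))
    (hF : Function.Surjective (algebraMap A F))
    (b : B) (r : F) (hr : aeval r (minpoly A b) = 0) : ∃ ψ : B →ₐ[A] F, ψ b = r := by
  have hfs := (faithfulSMul_iff_algebraMap_injective A B).2 hAB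
  have hint : IsIntegral A b := Algebra.IsIntegral.isIntegral b
  let i : AdjoinRoot (minpoly A b) →ₐ[A] B := AdjoinRoot.liftAlgHom _ (Algebra.ofId A B) b
    (by exact minpoly.aeval A b)
  have hi : Function.Injective i := by
    rw [injective_iff_map_eq_zero]
    intro x hx
    obtain ⟨p, rfl⟩ := AdjoinRoot.mk_surjective x
    have hx' : aeval b p = 0 := by
      rw [← hx]; simp [i]; rfl
    exact AdjoinRoot.mk_eq_zero.2 (minpoly.isIntegrallyClosed_dvd hint hx')
  let χ : AdjoinRoot (minpoly A b) →ₐ[A] F := AdjoinRoot.liftAlgHom _ (Algebra.ofId A F) r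
    (by exact hr)
  let := i.toRingHom.toAlgebra
  let := χ.toRingHom.toAlgebra
  have : IsScalarTower A (AdjoinRoot (minpoly A b)) B :=
    IsScalarTower.of_algebraMap_eq (fun a => (i.commutes a).symm)
  have hint' : Algebra.IsIntegral (AdjoinRoot (minpoly A b)) B := Algebra.IsIntegral.tower_top A
  have hF' : Function.Surjective (algebraMap (AdjoinRoot (minpoly A b)) F) := by
    intro y
    obtain ⟨a, ha⟩ := hF y
    exact ⟨algebraMap A _ a, by rw [← ha]; exact χ.commutes a⟩
  have hkp := RingHom.ker_isPrime (algebraMap (AdjoinRoot (minpoly A b)) F)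
  obtain ⟨Q, hQp, hQ⟩ := Ideal.exists_ideal_over_prime_of_isIntegral_of_isDomain
    (S := B) (RingHom.ker (algebraMap (AdjoinRoot (minpoly A b)) F))
    (by rw [(RingHom.injective_iff_ker_eq_bot _).1 (show Function.Injective (algebraMap _ B) from hi)]; exact bot_le)
  obtain ⟨ψ, -⟩ := aux_lift hF' Q hQ
  refine ⟨(ψ.toRingHom.comp (RingHom.id B)).toAlgebra |> fun _ => AlgHom.mk ψ.toRingHom ?_, ?_⟩
  · intro a
    have := ψ.commutes (algebraMap A _ a)
    rw [← IsScalarTower.algebraMap_apply] at this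
    exact this.trans (χ.commutes a)
  · have := ψ.commutes (AdjoinRoot.root _)
    have h1 : algebraMap (AdjoinRoot (minpoly A b)) B (AdjoinRoot.root _) = b := by
      change i _ = b
      exact AdjoinRoot.liftAlgHom_root (minpoly A b) _ _ _
    have h2 : algebraMap (AdjoinRoot (minpoly A b)) F (AdjoinRoot.root _) = r := by
      change χ _ = r
      exact AdjoinRoot.liftAlgHom_root (minpoly A b) _ _ _
    rw [h1, h2] at this
    exact this

theorem aux_core (A B K L : Type*) [CommRing A] [IsDomain A] [CommRing B] [IsDomain B]
  [Algebra A B] [Module.Finite A B] [Field K] [Field L] [Algebra A K] [IsFractionRing A K]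
  [Algebra B L] [IsFractionRing B L] [Algebra K L] [Algebra A L] [IsScalarTower A K L]
  [IsScalarTower A B L] [IsIntegrallyClosed A]
    (F : Type*) [Field F] [IsAlgClosed F] :
    ∃ f : A, f ≠ 0 ∧ ∀ m : PrimeSpectrum A, f ∉ m.asIdeal →
      ∀ χ : A →+* F, Function.Surjective χ → RingHom.ker χ = m.asIdeal →
      (PrimeSpectrum.comap (algebraMap A B) ⁻¹' {m}).Finite ∧
      (PrimeSpectrum.comap (algebraMap A B) ⁻¹' {m}).ncard = Field.finSepDegree K L := by
  classical
  obtain ⟨q, hq⟩ := ExpChar.exists K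
  obtain ⟨b, hdeg, hsep, hgen⟩ := aux_gen A B K L q
  obtain ⟨c₀, hc₀, u, v, huv⟩ := aux_sep hsep
  choose n c hc h hh using hgen
  obtain ⟨s, hs⟩ := Module.Finite.fg_top (R := A) (M := B)
  refine ⟨c₀ * ∏ x ∈ s, c x, mul_ne_zero hc₀ (Finset.prod_ne_zero_iff.2 fun x _ => hc x), ?_⟩
  intro m hfm χ hsurj hker
  let := χ.toAlgebra
  change Function.Surjective (algebraMap A F) at hsurj
  change RingHom.ker (algebraMap A F) = m.asIdeal at hker
  have hf0 : algebraMap A F (c₀ * ∏ x ∈ s, c x) ≠ 0 := by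
    rwa [Ne, ← RingHom.mem_ker, hker]
  rw [map_mul, map_prod] at hf0
  have h₀ := left_ne_zero_of_mul hf0
  have h₁ := Finset.prod_ne_zero_iff.1 (right_ne_zero_of_mul hf0)
  have hmonic : (minpoly A b).Monic := minpoly.monic (Algebra.IsIntegral.isIntegral b)
  let g : F[X] := (minpoly A b).map (algebraMap A F)
  have hgsep : g.Separable := by
    refine ⟨C (algebraMap A F c₀)⁻¹ * u.map (algebraMap A F),
      C (algebraMap A F c₀)⁻¹ * v.map (algebraMap A F), ?_⟩
    have := congrArg (Polynomial.map (algebraMap A F)) huv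
    simp only [Polynomial.map_add, Polynomial.map_mul, map_C] at this
    rw [derivative_map, mul_assoc, mul_assoc, ← mul_add, this, ← C_mul, inv_mul_cancel₀ h₀, C_1]
  have hcard : Fintype.card (g.rootSet F) = Field.finSepDegree K L := by
    rw [card_rootSet_eq_natDegree hgsep (IsAlgClosed.splits _), ← hdeg, hmonic.natDegree_map]
  have hg0 : g ≠ 0 := (hmonic.map _).ne_zero
  -- the two bijections
  let e₁ : (B →ₐ[A] F) → g.rootSet F := fun ψ => ⟨ψ b, by
    rw [mem_rootSet]
    refine ⟨hg0, ?_⟩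
    rw [aeval_map_algebraMap, aeval_algHom_apply, minpoly.aeval, map_zero]⟩
  have he₁ : Function.Bijective e₁ := by
    constructor
    · intro ψ₁ ψ₂ h12
      have hb : ψ₁ b = ψ₂ b := congrArg Subtype.val h12
      have hx : ∀ x ∈ s, ψ₁ x = ψ₂ x := by
        intro x hx
        apply aux_pow_inj A K F (IsFractionRing.injective A K) q (n x)
        apply mul_left_cancel₀ (h₁ x hx)
        have e1 := congrArg ψ₁ (hh x)
        have e2 := congrArg ψ₂ (hh x)
        rw [map_mul, map_pow, AlgHom.commutes, ← aeval_algHom_apply] at e1 e2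
        simp only
        rw [e1, e2, hb]
      apply AlgHom.toLinearMap_injective
      exact LinearMap.ext_on (s := (s : Set B)) hs hx
    · rintro ⟨r, hr⟩
      rw [mem_rootSet, aeval_map_algebraMap] at hr
      obtain ⟨ψ, hψ⟩ := aux_extend (aux_inj A B K L) hsurj b r hr.2
      exact ⟨ψ, Subtype.ext hψ⟩
  let e₂ : (B →ₐ[A] F) → (PrimeSpectrum.comap (algebraMap A B) ⁻¹' {m}) := fun ψ =>
    ⟨⟨RingHom.ker ψ, RingHom.ker_isPrime _⟩, by
      apply PrimeSpectrum.ext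
      rw [← hker]
      ext a
      simp [RingHom.mem_ker]⟩
  have he₂ : Function.Bijective e₂ := by
    constructor
    · intro ψ₁ ψ₂ h12
      exact aux_ext hsurj _ _ (congrArg (fun z => z.1.asIdeal) h12)
    · rintro ⟨Q, hQ⟩
      have hQ' : Q.asIdeal.comap (algebraMap A B) = RingHom.ker (algebraMap A F) := by
        rw [hker]; exact congrArg PrimeSpectrum.asIdeal hQ
      obtain ⟨ψ, hψ⟩ := aux_lift hsurj Q.asIdeal hQ'
      exact ⟨ψ, Subtype.ext (PrimeSpectrum.ext hψ)⟩
  let e := (Equiv.ofBijective e₂ he₂).symm.trans (Equiv.ofBijective e₁ he₁)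
  constructor
  · exact Set.finite_coe_iff.1 (Finite.of_equiv _ e.symm)
  · rw [← Nat.card_coe_set_eq, Nat.card_congr e, Nat.card_eq_fintype_card, hcard]

theorem aux_residue {k A : Type*} [Field k] [IsAlgClosed k] [CommRing A] (ρ : k →+* A)
    (hρ : ρ.FiniteType) (m : Ideal A) [m.IsMaximal] :
    ∃ χ : A →+* k, Function.Surjective χ ∧ RingHom.ker χ = m := by
  let := ρ.toAlgebra
  have hft : Algebra.FiniteType k A := hρ
  let := Ideal.Quotient.field m
  have hft' : Algebra.FiniteType k (A ⧸ m) :=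
    Algebra.FiniteType.of_surjective (Ideal.Quotient.mkₐ k m) (Ideal.Quotient.mkₐ_surjective k m)
  have hfin : Module.Finite k (A ⧸ m) := finite_of_finite_type_of_isJacobsonRing k (A ⧸ m)
  let e : k ≃+* (A ⧸ m) := RingEquiv.ofBijective (algebraMap k (A ⧸ m))
    IsAlgClosed.algebraMap_bijective_of_isIntegral
  refine ⟨e.symm.toRingHom.comp (Ideal.Quotient.mk m),
    e.symm.surjective.comp Ideal.Quotient.mk_surjective, ?_⟩
  ext x
  simp [RingHom.mem_ker, Ideal.Quotient.eq_zero_iff_mem]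

theorem aux_normal (V : Scheme.{u}) [IsIntegral V]
    (hV : ∀ x : V, IsDomain (V.presheaf.stalk x) ∧ IsIntegrallyClosed (V.presheaf.stalk x))
    (U : V.Opens) (hU : IsAffineOpen U) [Nonempty U] : IsIntegrallyClosed Γ(V, U) := by
  apply IsIntegrallyClosed.of_localization_maximal
  intro p _ hp
  let y : PrimeSpectrum Γ(V, U) := ⟨p, hp.isPrime⟩
  have hy : hU.fromSpec y ∈ U := by
    have : hU.fromSpec y ∈ Set.range hU.fromSpec := ⟨y, rfl⟩
    rwa [hU.range_fromSpec] at this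
  let := V.presheaf.algebra_section_stalk ⟨hU.fromSpec y, hy⟩
  have hloc : IsLocalization p.primeCompl (V.presheaf.stalk (hU.fromSpec y)) :=
    hU.isLocalization_stalk' y hy
  have hic := (hV (hU.fromSpec y)).2
  exact IsIntegrallyClosed.of_equiv
    (IsLocalization.algEquiv p.primeCompl (V.presheaf.stalk (hU.fromSpec y))
      (Localization.AtPrime p)).toRingEquiv

theorem aux_germ_eqToHom (V : Scheme.{u}) (U : V.Opens) (x y : V) (h : y = x) (hx : x ∈ U)
    (e : V.presheaf.stalk x = V.presheaf.stalk y) :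
    V.presheaf.germ U x hx ≫ eqToHom e = V.presheaf.germ U y (h ▸ hx) := by
  subst h
  simp

theorem aux_fiber {V V' : Scheme.{u}} (φ : V' ⟶ V) (U : V.Opens) (hU : IsAffineOpen U)
    (hU' : IsAffineOpen (φ ⁻¹ᵁ U)) (y : PrimeSpectrum Γ(V, U)) :
    φ.base ⁻¹' {hU.fromSpec y} =
      hU'.fromSpec '' (PrimeSpectrum.comap (φ.app U).hom ⁻¹' {y}) := by
  have hcomm : ∀ z, hU.fromSpec (PrimeSpectrum.comap (φ.app U).hom z) = φ (hU'.fromSpec z) := by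
    intro z
    have := hU.SpecMap_appLE_fromSpec φ hU' le_rfl
    rw [← Scheme.Hom.app_eq_appLE] at this
    exact congrArg (fun f => f.base z) this
  ext w
  constructor
  · intro hw
    have hw' : φ w = hU.fromSpec y := hw
    have hwU : w ∈ Set.range hU'.fromSpec := by
      rw [hU'.range_fromSpec]
      change φ w ∈ U
      have : hU.fromSpec y ∈ Set.range hU.fromSpec := ⟨y, rfl⟩
      rw [hU.range_fromSpec] at this
      rwa [hw']
    obtain ⟨z, rfl⟩ := hwU
    refine ⟨z, ?_, rfl⟩
    apply hU.fromSpec.isOpenEmbedding.injective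
    rw [← hw']
    exact hcomm z
  · rintro ⟨z, hz, rfl⟩
    change φ (hU'.fromSpec z) = _
    have hz' : PrimeSpectrum.comap (φ.app U).hom z = y := hz
    exact (hcomm z).symm.trans (congrArg (fun t => hU.fromSpec t) hz')

theorem aux_main {k : Type u} [Field k] [IsAlgClosed k]
    (V V' : Scheme.{u})
    (sV : V ⟶ Spec (CommRingCat.of k)) 
    [IsIntegral V] [IsIntegral V'] [LocallyOfFiniteType sV] 
    (hVnormal : ∀ x : V, IsDomain (V.presheaf.stalk x) ∧
      IsIntegrallyClosed (V.presheaf.stalk x))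
    (φ : V' ⟶ V) [IsFinite φ] (hgen : φ.base (genericPoint V') = genericPoint V)
    [Algebra V.functionField V'.functionField]
    (halg : ∀ (U : V.Opens) (h : genericPoint V ∈ U) (a : Γ(V, U)),
      algebraMap V.functionField V'.functionField (V.presheaf.germ U _ h a) =
        V'.presheaf.germ (φ ⁻¹ᵁ U) (genericPoint V') (by change φ.base _ ∈ U; rwa [hgen]) (φ.app U a)) :
    ∃ U₀ : V.Opens, (U₀ : Set V).Nonempty ∧
      ∀ x ∈ U₀, IsClosed ({x} : Set V) →
        (φ.base ⁻¹' {x}).Finite ∧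
          (φ.base ⁻¹' {x}).ncard = Field.finSepDegree V.functionField V'.functionField := by
  obtain ⟨U, hU, hgU, -⟩ := exists_isAffineOpen_mem_and_subset
    (X := V) (x := genericPoint V) (U := ⊤) trivial
  have hU' : IsAffineOpen (φ ⁻¹ᵁ U) := hU.preimage φ
  have hne : Nonempty U := ⟨⟨_, hgU⟩⟩
  have hgU' : genericPoint V' ∈ φ ⁻¹ᵁ U := by change φ.base _ ∈ U; rwa [hgen]
  have hne' : Nonempty (φ ⁻¹ᵁ U) := ⟨⟨_, hgU'⟩⟩
  let := (φ.app U).hom.toAlgebra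
  have hfin : Module.Finite Γ(V, U) Γ(V', φ ⁻¹ᵁ U) := φ.finite_app U hU
  have := functionField_isFractionRing_of_isAffineOpen V U hU
  have := functionField_isFractionRing_of_isAffineOpen V' _ hU'
  have hic := aux_normal V hVnormal U hU
  let : Algebra Γ(V, U) V'.functionField :=
    ((algebraMap V.functionField V'.functionField).comp
      (algebraMap Γ(V, U) V.functionField)).toAlgebra
  have : IsScalarTower Γ(V, U) V.functionField V'.functionField :=
    IsScalarTower.of_algebraMap_eq (fun _ => rfl)
  have : IsScalarTower Γ(V, U) Γ(V', φ ⁻¹ᵁ U) V'.functionField :=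
    IsScalarTower.of_algebraMap_eq (fun a => halg U hgU a)
  obtain ⟨f, hf, H⟩ := aux_core Γ(V, U) Γ(V', φ ⁻¹ᵁ U) V.functionField V'.functionField k
  refine ⟨V.basicOpen f, ?_, ?_⟩
  · rw [Set.nonempty_iff_ne_empty]
    intro h
    exact hf ((basicOpen_eq_bot_iff f).1 (TopologicalSpace.Opens.ext h))
  · intro x hx hxc
    have hxU : x ∈ U := V.basicOpen_le f hx
    obtain ⟨y, rfl⟩ : x ∈ Set.range hU.fromSpec := by rw [hU.range_fromSpec]; exact hxU
    have hyc : IsClosed ({y} : Set (PrimeSpectrum Γ(V, U))) := by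
      have := hxc.preimage hU.fromSpec.continuous
      rwa [← Set.image_singleton,
        Set.preimage_image_eq _ hU.fromSpec.isOpenEmbedding.injective] at this
    have hmax : y.asIdeal.IsMaximal := (PrimeSpectrum.isClosed_singleton_iff_isMaximal y).1 hyc
    have hfy : f ∉ y.asIdeal := by
      have h1 : y ∈ hU.fromSpec ⁻¹ᵁ V.basicOpen f := hx
      rw [hU.fromSpec_preimage_basicOpen] at h1
      exact h1
    have hft : (sV.appLE ⊤ U le_top).hom.FiniteType :=
      sV.finiteType_appLE (isAffineOpen_top _) hU _
    obtain ⟨χ, hχ, hker⟩ := aux_residue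
      ((sV.appLE ⊤ U le_top).hom.comp (Scheme.ΓSpecIso (CommRingCat.of k)).inv.hom)
      (hft.comp (RingHom.FiniteType.of_surjective _
        (Scheme.ΓSpecIso (CommRingCat.of k)).symm.commRingCatIsoToRingEquiv.surjective)) y.asIdeal
    obtain ⟨h1, h2⟩ := H y hfy χ hχ hker
    rw [aux_fiber φ U hU hU' y]
    exact ⟨h1.image _, (Set.ncard_image_of_injective _
      hU'.fromSpec.isOpenEmbedding.injective).trans h2⟩

/-- Let `k` be an algebraically closed field, let `V` and `V'` be integral
projective `k`-varieties (separated `k`-schemes of finite type) with `V` normal, and let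
`φ : V' → V` be a finite surjective morphism.  If `d` is the separable degree of the induced
function field extension `k(V) ↪ k(V')`, then there is a nonempty (hence dense) Zariski-open
subset `U₀` of `V` such that the fiber of `φ` over every closed point of `U₀` contains exactly
`d` points. -/
theorem exists_dense_open_fiber_card_eq_sepDegree
    {k : Type u} [Field k] [IsAlgClosed k]
    (V V' : Scheme.{u})
    (sV : V ⟶ Spec (CommRingCat.of k)) (sV' : V' ⟶ Spec (CommRingCat.of k))
    [IsIntegral V] [IsIntegral V']
    [IsSeparated sV] [LocallyOfFiniteType sV] [QuasiCompact sV]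
    [IsSeparated sV'] [LocallyOfFiniteType sV'] [QuasiCompact sV']
    (hVproj : IsProjectiveOver V sV) (hV'proj : IsProjectiveOver V' sV')
    (hVnormal : ∀ x : V, IsDomain (V.presheaf.stalk x) ∧
      IsIntegrallyClosed (V.presheaf.stalk x))
    (φ : V' ⟶ V) [IsFinite φ] [Surjective φ] (hφk : φ ≫ sV = sV') :
    -- the generic point of `V'` maps to the generic point of `V`, so that `φ` induces an
    -- extension of function fields `k(V) ↪ k(V')`
    have hgen : φ.base (genericPoint V') = genericPoint V := by
      refine ((genericPoint_spec V).eq ?_).symm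
      rw [isGenericPoint_def]
      apply Set.eq_univ_of_univ_subset
      have h1 : φ.base '' closure {genericPoint V'} ⊆ closure (φ.base '' {genericPoint V'}) :=
        image_closure_subset_closure_image (by fun_prop)
      rw [(genericPoint_spec V').def, Set.image_univ, Set.image_singleton] at h1
      exact (φ.surjective.range_eq ▸ h1 : Set.univ ⊆ _)
    letI : Algebra V.functionField V'.functionField :=
      ((eqToHom (by rw [hgen]) :
          V.functionField ⟶ V.presheaf.stalk (φ.base (genericPoint V'))) ≫
        φ.stalkMap (genericPoint V')).hom.toAlgebra
    ∃ U₀ : V.Opens, (U₀ : Set V).Nonempty ∧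
      ∀ x ∈ U₀, IsClosed ({x} : Set V) →
        (φ.base ⁻¹' {x}).Finite ∧
          (φ.base ⁻¹' {x}).ncard = Field.finSepDegree V.functionField V'.functionField := by
  intro hgen
  letI : Algebra V.functionField V'.functionField :=
      ((eqToHom (by rw [hgen]) :
          V.functionField ⟶ V.presheaf.stalk (φ.base (genericPoint V'))) ≫
        φ.stalkMap (genericPoint V')).hom.toAlgebra
  refine aux_main V V' sV hVnormal φ hgen ?_
  intro U h a
  have h' : φ (genericPoint V') ∈ U := by change φ.base _ ∈ U; rwa [hgen]
  have key : V.presheaf.germ U _ h ≫ (eqToHom (by rw [hgen]) :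
          V.functionField ⟶ V.presheaf.stalk (φ.base (genericPoint V'))) ≫
        φ.stalkMap (genericPoint V') = φ.app U ≫ V'.presheaf.germ (φ ⁻¹ᵁ U) (genericPoint V') h' := by
    rw [← Category.assoc, aux_germ_eqToHom V U _ _ hgen h]
    exact φ.germ_stalkMap U _ h'
  exact congrArg (fun f => f.hom a) key
end

section
/- Let L be an algebraically closed field of characteristic p > 0 equipped with a nontrivial nonarchimedean absolute value |·| : L → ℝ, and let φ : L → L be the map φ(z) = z^p − z. Let F ⊆ L denote the prime field (the image of 𝔽_p in L). Then for every a ∈ L and every real number r with 0 < r ≤ 1: (1) the preimage under φ of the open ball B(φ(a), r) = { y ∈ L : |y − φ(a)| < r } equals the union over c ∈ F of the open balls B(a + c, r) = { z ∈ L : |z − (a + c)| < r }; (2) these p balls are pairwise disjoint; (3) for each c ∈ F, φ restricts to a bijection from B(a + c, r) onto B(φ(a), r). -/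
open Polynomial in
lemma as_prod {L : Type*} [Field L] (p : ℕ) [Fact p.Prime] [CharP L p] (w : L) :
    w ^ p - w = ∏ c : ZMod p, (w - ZMod.castHom (dvd_refl p) L c) := by
  have hp1 : 1 < p := (Fact.out : p.Prime).one_lt
  have hroots : (X ^ p - X : (ZMod p)[X]).roots = Finset.univ.val := by
    have := FiniteField.roots_X_pow_card_sub_X (ZMod p)
    rwa [ZMod.card] at this
  have hmon : (X ^ p - X : (ZMod p)[X]).Monic := by
    apply monic_X_pow_sub
    rw [degree_X]
    exact_mod_cast hp1
  have h := prod_multiset_X_sub_C_of_monic_of_roots_card_eq hmon (by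
    rw [hroots, FiniteField.X_pow_card_sub_X_natDegree_eq _ hp1]
    simp [ZMod.card])
  rw [hroots] at h
  have h2 := congrArg (eval₂ (ZMod.castHom (dvd_refl p) L) w) h
  change eval₂ _ w (∏ c : ZMod p, (X - C c)) = _ at h2
  rw [eval₂_finsetProd] at h2
  simp only [eval₂_sub, eval₂_X, eval₂_C, eval₂_X_pow] at h2
  exact h2.symm

open Polynomial in
lemma as_root {L : Type*} [Field L] [IsAlgClosed L] (p : ℕ) (hp1 : 1 < p) (y : L) :
    ∃ w : L, w ^ p - w = y := by
  have hd : (X ^ p - (X + C y) : L[X]).degree = p := by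
    rw [degree_sub_eq_left_of_degree_lt]
    · simp
    · rw [degree_X_pow, degree_X_add_C]
      exact_mod_cast hp1
  obtain ⟨w, hw⟩ := IsAlgClosed.exists_root (X ^ p - (X + C y) : L[X]) (by
    rw [hd]; exact_mod_cast (by omega : p ≠ 0))
  refine ⟨w, ?_⟩
  simp [IsRoot] at hw
  linear_combination hw

lemma as_val {L : Type*} [Field L] (p : ℕ) (hp1 : 1 < p) (v : AbsoluteValue L ℝ)
    (hna : IsNonarchimedean v) (w : L) (hw : v w < 1) : v (w ^ p - w) = v w := by
  by_cases h0 : w = 0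
  · subst h0
    simp [show p ≠ 0 by omega]
  have hpos : 0 < v w := v.pos h0
  have hlt : v (w ^ p) < v (-w) := by
    rw [map_pow, v.map_neg]
    calc v w ^ p < v w ^ 1 := pow_lt_pow_right_of_lt_one₀ hpos hw hp1
      _ = v w := pow_one _
  have := hna.add_eq_right_of_lt hlt
  rw [sub_eq_add_neg, this, v.map_neg]

/-- Let `L` be an algebraically closed field of characteristic `p > 0` with a
nontrivial nonarchimedean absolute value `v`, let `φ z = z ^ p - z`, and let `F ⊆ L` be the
prime field (the image of `𝔽_p` in `L`).  For every `a ∈ L` and every real `0 < r ≤ 1`: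
(1) `φ ⁻¹' B(φ a, r) = ⋃ (c ∈ F), B(a + c, r)`; (2) these `p` balls are pairwise disjoint;
(3) for each `c ∈ F`, `φ` restricts to a bijection from `B(a + c, r)` onto `B(φ a, r)`. -/
theorem artinSchreier_preimage_ball
    {L : Type*} [Field L] [IsAlgClosed L]
    (p : ℕ) [Fact p.Prime] [CharP L p]
    (v : AbsoluteValue L ℝ)
    (hna : IsNonarchimedean v)
    (hnt : ∃ x : L, v x ≠ 0 ∧ v x ≠ 1)
    (φ : L → L) (hφ : ∀ z : L, φ z = z ^ p - z)
    (F : Set L) (hF : F = Set.range (ZMod.castHom (dvd_refl p) L))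
    (a : L) (r : ℝ) (hr0 : 0 < r) (hr1 : r ≤ 1) :
    (φ ⁻¹' { y : L | v (y - φ a) < r } = ⋃ c ∈ F, { z : L | v (z - (a + c)) < r }) ∧
    (∀ c ∈ F, ∀ c' ∈ F, c ≠ c' →
      Disjoint { z : L | v (z - (a + c)) < r } { z : L | v (z - (a + c')) < r }) ∧
    (∀ c ∈ F, Set.BijOn φ { z : L | v (z - (a + c)) < r } { y : L | v (y - φ a) < r }) := by
  have hp1 : 1 < p := (Fact.out : p.Prime).one_lt
  have hsub : ∀ z w, φ z - φ w = φ (z - w) := by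
    intro z w
    rw [hφ, hφ, hφ, sub_pow_char]
    ring
  have hFφ : ∀ c ∈ F, φ c = 0 := by
    intro c hc
    rw [hF] at hc
    obtain ⟨d, rfl⟩ := hc
    rw [hφ, ← map_pow, ZMod.pow_card, sub_self]
  have hF0 : ∀ c ∈ F, ∀ c' ∈ F, c - c' ∈ F := by
    rw [hF]
    rintro _ ⟨d, rfl⟩ _ ⟨d', rfl⟩
    exact ⟨d - d', map_sub _ _ _⟩
  have hval : ∀ w, v w < 1 → v (φ w) = v w := by
    intro w hw
    rw [hφ]
    exact as_val p hp1 v hna w hw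
  have hB : ∀ w, v (φ w) < r → ∃ c ∈ F, v (w - c) < r := by
    intro w hw
    have : ∃ c ∈ F, v (w - c) < 1 := by
      by_contra! hcon
      have h1 : 1 ≤ v (φ w) := by
        rw [hφ, as_prod p w, map_prod]
        rw [← Finset.prod_const_one (s := (Finset.univ : Finset (ZMod p)))]
        apply Finset.prod_le_prod (fun _ _ => zero_le_one)
        intro c _
        exact hcon _ (hF ▸ ⟨c, rfl⟩)
      linarith
    obtain ⟨c, hc, h⟩ := this
    refine ⟨c, hc, ?_⟩
    rw [← hval _ h, ← hsub, hFφ c hc, sub_zero]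
    exact hw
  have hshift : ∀ c ∈ F, ∀ z, φ (z - (a + c)) = φ z - φ a := by
    intro c hc z
    rw [show z - (a + c) = (z - a) - c by ring, ← hsub, hFφ c hc, sub_zero, hsub]
  have hmaps : ∀ c ∈ F, ∀ z, v (z - (a + c)) < r → v (φ z - φ a) < r := by
    intro c hc z hz
    rw [← hshift c hc, hval _ (hz.trans_le hr1)]
    exact hz
  have hdiff : ∀ x y : L, v x < r → v y < r → v (x - y) < r := by
    intro x y hx hy
    have := hna x (-y)
    rw [v.map_neg, ← sub_eq_add_neg] at this
    exact this.trans_lt (max_lt hx hy)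
  have hzero : ∀ w, v w < r → φ w = 0 → w = 0 := by
    intro w hw h
    have := hval w (hw.trans_le hr1)
    rw [h, map_zero] at this
    exact v.eq_zero.mp this.symm
  refine ⟨?_, ?_, ?_⟩
  · ext z
    simp only [Set.mem_preimage, Set.mem_setOf_eq, Set.mem_iUnion, exists_prop]
    constructor
    · intro h
      rw [hsub] at h
      obtain ⟨c, hc, h⟩ := hB _ h
      exact ⟨c, hc, by rwa [← sub_sub]⟩
    · rintro ⟨c, hc, h⟩
      exact hmaps c hc z h
  · intro c hc c' hc' hne
    rw [Set.disjoint_left]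
    intro z hz hz'
    simp only [Set.mem_setOf_eq] at hz hz'
    have h := hdiff _ _ hz' hz
    rw [show z - (a + c') - (z - (a + c)) = c - c' by ring] at h
    exact hne (sub_eq_zero.mp (hzero _ h (hFφ _ (hF0 c hc c' hc'))))
  · intro c hc
    refine ⟨fun z hz => hmaps c hc z hz, ?_, ?_⟩
    · intro z hz w hw h
      simp only [Set.mem_setOf_eq] at hz hw
      have h2 := hdiff _ _ hz hw
      rw [show z - (a + c) - (w - (a + c)) = z - w by ring] at h2
      exact sub_eq_zero.mp (hzero _ h2 (by rw [← hsub, h, sub_self]))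
    · intro y hy
      simp only [Set.mem_setOf_eq] at hy
      obtain ⟨w, hw⟩ := as_root p hp1 (y - φ a)
      rw [← hφ] at hw
      obtain ⟨c', hc', h⟩ := hB w (by rwa [hw])
      refine ⟨w - c' + (a + c), ?_, ?_⟩
      · simpa only [Set.mem_setOf_eq, add_sub_cancel_right] using h
      · have h3 := hshift c hc (w - c' + (a + c))
        rw [add_sub_cancel_right, ← hsub, hFφ c' hc', sub_zero, hw] at h3
        exact (sub_left_injective h3).symm
end

section
/- Let m ≥ 1 and endow [0,∞]^m (the m-fold product of the extended nonnegative real half-line with its order topology) with the product topology. Let D be a nonempty subset of [0,∞]^m satisfying: (i) D is upward closed for the coordinatewise order, i.e. if u ∈ D and u_j ≤ v_j for all j then v ∈ D; (ii) D is closed under limits of coordinatewise nonincreasing sequences, i.e. if (u⁽ᵏ⁾) is a sequence in D with u⁽ᵏ⁺¹⁾_j ≤ u⁽ᵏ⁾_j for all j and k, then its (coordinatewise) limit belongs to D. Then D is a closed, hence compact, subset of [0,∞]^m; consequently every continuous function g : [0,∞]^m → [0,∞] attains its infimum over D at some point of D. -/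
open ENNReal

/-- Let `m ≥ 1` and let `D` be a nonempty subset of `[0,∞]^m` which is upward
closed for the coordinatewise order and closed under limits of coordinatewise nonincreasing
sequences (such a sequence converges to the tuple of coordinatewise infima).  Then `D` is
closed, hence compact, and every continuous `g : [0,∞]^m → [0,∞]` attains its infimum over `D`
at some point of `D`. -/
theorem upwardClosed_antitoneLimitClosed_isClosed_isCompact_attains_inf
    (m : ℕ) (hm : 1 ≤ m)
    (D : Set (Fin m → ℝ≥0∞)) (hne : D.Nonempty)
    (hup : ∀ u ∈ D, ∀ w : Fin m → ℝ≥0∞, (∀ j, u j ≤ w j) → w ∈ D)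
    (hlim : ∀ u : ℕ → (Fin m → ℝ≥0∞), (∀ k, u k ∈ D) →
      (∀ k j, u (k + 1) j ≤ u k j) → (fun j => ⨅ k, u k j) ∈ D) :
    IsClosed D ∧ IsCompact D ∧
      ∀ g : (Fin m → ℝ≥0∞) → ℝ≥0∞, Continuous g → ∃ d ∈ D, ∀ u ∈ D, g d ≤ g u := by
  have hc : IsClosed D := by
    apply IsSeqClosed.isClosed
    intro u x hu hx
    have h := hlim (fun k j => ⨆ i ≥ k, u i j)
      (fun k => hup (u k) (hu k) _ (fun j => le_iSup₂_of_le k le_rfl le_rfl))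
      (fun k j => biSup_mono (fun i hi => le_trans (Nat.le_succ k) hi))
    have hxe : (fun j => ⨅ k, ⨆ i ≥ k, u i j) = x := by
      funext j
      rw [← Filter.limsup_eq_iInf_iSup_of_nat]
      exact ((tendsto_pi_nhds.1 hx) j).limsup_eq
    rw [← hxe]
    exact h
  refine ⟨hc, hc.isCompact, fun g hg => ?_⟩
  obtain ⟨d, hd, hmin⟩ := hc.isCompact.exists_isMinOn hne hg.continuousOn
  exact ⟨d, hd, fun u hu => hmin hu⟩
end
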